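/- Let A be a Q(q)-algebra, B_i, B_j ∈ A, Z central in A, a_{ij} = −1, and suppose B_i² B_j − [2]_q B_i B_j B_i + B_j B_i² = q Z B_j. Fix p̄ ∈ Z/2, n = 1, e ∈ {±1}, and define for m ≥ 0 the element ỹ_m ∈ A by the formulas (6)–(7) of the paper with q_i k̃_i r_i(T_{w_•}E_i) replaced by q Z (so ỹ_m is a Z[q,q^{−1}][Z]-linear combination of terms B^{(r)}_{i,p̄} B_j B^{(s)}_{i,p̄+1̄} with r + s + 2u = m). Then ỹ_m = 0 for all m ≥ 2 = 1 − a_{ij}. -/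

import Mathlib

noncomputable section

abbrev K : Type := RatFunc ℚ

/-- The indeterminate `q` in `ℚ(q)`. -/
def qq : K := RatFunc.X

/-- Balanced quantum integer at base `x`. -/
def qintx (x : K) (m : ℤ) : K := (x ^ m - x ^ (-m)) / (x - x⁻¹)

/-- Balanced quantum integer `[m]_q`. -/
def qint (m : ℤ) : K := qintx qq m

/-- Quantum factorial at base `x`. -/
def qfactx (x : K) (m : ℕ) : K := ∏ j ∈ Finset.range m, qintx x ((j : ℤ) + 1)

/-- Quantum factorial `[m]_q!`. -/
def qfact (m : ℕ) : K := qfactx qq m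

/-- Gaussian binomial coefficient at base `x` (zero when `r > m`). -/
def qbinomx (x : K) (m r : ℕ) : K :=
  if r ≤ m then qfactx x m / (qfactx x r * qfactx x (m - r)) else 0

/-- Gaussian binomial coefficient. -/
def qbinom (m r : ℕ) : K := qbinomx qq m r

/-- The ı-divided powers `B^{(m)}_{p̄}` of `B` with central parameter `Z`,
given by the closed product formulas of the paper. -/
def iDP {A : Type*} [Ring A] [Algebra K A] (B Z : A) (p : ZMod 2) (m : ℕ) : A :=
  (qfact m)⁻¹ •
    ((if m % 2 = 1 then B else 1) *
      ((List.range (m / 2)).map (fun j =>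
        B ^ 2 -
          ((qint (if p = 1 then 2 * (j : ℤ) + 1
                  else if m % 2 = 1 then 2 * (j : ℤ) + 2 else 2 * (j : ℤ))) ^ 2 * qq) • Z)).prod)

/-- The usual divided power `x^{(k)} = x^k/[k]_q!`. -/
def dp {A : Type*} [Ring A] [Algebra K A] (x : A) (k : ℕ) : A := (qfact k)⁻¹ • x ^ k

/-- The element `ỹ_{i,j;1,m,p̄,t̄,e}` of the paper in the case `n = 1`, `a_{ij} = -1`,
with the central scalar `q_i k̃_i r_i(T_{w_•}E_i)` replaced by `q Z`. -/
def ytil {A : Type*} [Ring A] [Algebra K A] (Bi Bj Z : A) (p : ZMod 2) (e : ℤ) (m : ℕ) : A :=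
  ∑ u ∈ Finset.range (m / 2 + 1), ∑ r ∈ Finset.range (m - 2 * u + 1),
    (qq ^ u *
      (if m % 2 = 0 then
        (if (r : ZMod 2) = p + 1 then
          (-1 : K) ^ r * qq ^ (-(e * (((m : ℤ) - 1) * ((r : ℤ) + (u : ℤ)) - (r : ℤ)))) *
            qbinomx (qq ^ 2) ((m - 2) / 2) u
        else
          (-1 : K) ^ r * qq ^ (-(e * (((m : ℤ) - 3) * ((r : ℤ) + (u : ℤ)) + (r : ℤ)))) *
            qbinomx (qq ^ 2) ((m - 2) / 2) u)
      else
        (if (r : ZMod 2) = p + 1 then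
          (-1 : K) ^ r * qq ^ (-(e * ((m : ℤ) - 2) * ((r : ℤ) + (u : ℤ)))) *
            qbinomx (qq ^ 2) ((m - 1) / 2) u
        else
          (-1 : K) ^ r * qq ^ (-(e * ((m : ℤ) - 2) * ((r : ℤ) + (u : ℤ)))) *
            qbinomx (qq ^ 2) ((m - 3) / 2) u))) •
      (Z ^ u * (iDP Bi Z p r * Bj * iDP Bi Z (p + 1) (m - 2 * u - r)))

/-!
Put `w = q^e`. Multiplication by `B_i` on either side raises and lowers the index of an ı-divided
power, and this yields the three-term recursion
`[m+2] ỹ_{m+2} = ỹ_{m+1} B_i - w^{-(2m+1)} B_i ỹ_{m+1} + w^{-2m} [m-1] q Z ỹ_m` for `m ≥ 1`.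
It holds coefficientwise in the terms `(qZ)^u B^{(r)} B_j B^{(s)}`: apart from a sign and an
explicit power of `w`, the coefficients of `ỹ_m` depend on `r` only through its parity, and the
identity among them reduces to a weighted `q`-Pascal rule for Gaussian binomials in `w²`. Both signs
`e` are covered at once because quantum integers are invariant under `q ↦ q⁻¹`. For `m = 1` the
factor `[m-1]` vanishes, so the recursion propagates `ỹ_2 = 0`, which is the ıSerre relation divided
by `[2]`.
-/

section QuantumIntegers

/-- The base `x` is generic if no quantum integer `[n]_x` with `n ≠ 0` vanishes. This excludes
`x = 0` and all roots of unity, in particular `x = x⁻¹`, where `[n]_x` is `0` by division by `0`. -/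
def IsGeneric (x : K) : Prop := ∀ n : ℤ, n ≠ 0 → qintx x n ≠ 0

theorem IsGeneric.ne_zero {x : K} (hx : IsGeneric x) : x ≠ 0 := by
  rintro rfl
  exact hx 1 one_ne_zero (by simp [qintx])

theorem IsGeneric.sub_inv_ne_zero {x : K} (hx : IsGeneric x) : x - x⁻¹ ≠ 0 := fun h =>
  hx 1 one_ne_zero (by simp [qintx, h])

theorem isGeneric_of_not_isOfFinOrder {x : K} (hx0 : x ≠ 0) (hx : ¬IsOfFinOrder x) :
    IsGeneric x := by
  have pow_ne_one {k : ℕ} (hk : 0 < k) : x ^ k ≠ 1 := fun h =>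
    hx (isOfFinOrder_iff_pow_eq_one.mpr ⟨k, hk, h⟩)
  have zpow_ne_one {n : ℤ} (hn : n ≠ 0) : x ^ n ≠ 1 := by
    obtain ⟨k, rfl | rfl⟩ := n.eq_nat_or_neg
    · simpa using pow_ne_one (k := k) (by omega)
    · simpa using pow_ne_one (k := k) (by omega)
  have zpow_sub_ne_zero {n : ℤ} (hn : n ≠ 0) : x ^ n - x ^ (-n) ≠ 0 := by
    rw [zpow_neg, sub_ne_zero, ne_eq, ← mul_eq_one_iff_eq_inv₀ (zpow_ne_zero n hx0),
      ← zpow_add₀ hx0]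
    exact zpow_ne_one (by omega)
  exact fun n hn => div_ne_zero (zpow_sub_ne_zero hn) (by simpa using zpow_sub_ne_zero one_ne_zero)

theorem isGeneric_qq : IsGeneric qq := by
  refine isGeneric_of_not_isOfFinOrder RatFunc.X_ne_zero fun h => ?_
  obtain ⟨n, hn, hpow⟩ := isOfFinOrder_iff_pow_eq_one.mp h
  have hX : (Polynomial.X : Polynomial ℚ) ^ n = 1 := RatFunc.algebraMap_injective ℚ <| by
    rwa [map_pow, RatFunc.algebraMap_X, map_one]
  exact hn.ne' (by simpa using congrArg Polynomial.natDegree hX)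

@[simp]
theorem qintx_zero (x : K) : qintx x 0 = 0 := by simp [qintx]

theorem qintx_one {x : K} (hx : IsGeneric x) : qintx x 1 = 1 := by
  simp [qintx, div_self hx.sub_inv_ne_zero]

@[simp]
theorem qintx_inv (x : K) (n : ℤ) : qintx x⁻¹ n = qintx x n := by
  rw [qintx, qintx, inv_zpow', inv_zpow', inv_inv, neg_neg, ← neg_sub (x ^ n), ← neg_sub x,
    neg_div_neg_eq]

theorem qintx_add {x : K} (hx : x ≠ 0) (a b : ℤ) :
    qintx x (a + b) = x ^ b * qintx x a + x ^ (-a) * qintx x b := by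
  simp only [qintx, neg_add, zpow_add₀ hx]
  ring

theorem qintx_sub {x : K} (hx : x ≠ 0) (a b : ℤ) :
    qintx x (a - b) = x ^ (-b) * qintx x a - x ^ (-a) * qintx x b := by
  simp only [qintx, sub_eq_add_neg, zpow_add₀ hx, neg_add, neg_neg]
  ring

theorem zpow_mul_qintx_add {x : K} (hx : x ≠ 0) (a b c : ℤ) :
    x ^ c * qintx x (a + b) = x ^ (c + b) * qintx x a + x ^ (c - a) * qintx x b := by
  rw [qintx_add hx, mul_add, ← mul_assoc, ← mul_assoc, ← zpow_add₀ hx, ← zpow_add₀ hx,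
    sub_eq_add_neg]

theorem qintx_mul_qintx {x : K} (hx : x ≠ 0) (a b c : ℤ) :
    qintx x a * qintx x b =
      qintx x (a - c) * qintx x (b - c) + qintx x (a + b - c) * qintx x c := by
  have hc : x ^ c ≠ 0 := zpow_ne_zero c hx
  simp only [qintx, div_mul_div_comm, ← add_div, neg_add, sub_eq_add_neg, zpow_add₀ hx, neg_neg,
    zpow_neg]
  congr 1
  field_simp
  ring

theorem qintx_two_mul_qintx_sq {x : K} (hx : IsGeneric x) (n : ℤ) :
    qintx x 2 * qintx (x ^ 2) n = qintx x (2 * n) := by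
  have h2 : x ^ (2 : ℤ) - x ^ (-2 : ℤ) ≠ 0 := (div_ne_zero_iff.mp (hx 2 two_ne_zero)).1
  have hsq (k : ℤ) : (x ^ 2) ^ k = x ^ (2 * k) := by rw [zpow_mul, zpow_ofNat]
  have hsq_inv : (x ^ 2)⁻¹ = x ^ (-2 : ℤ) := by rw [zpow_neg, zpow_ofNat]
  rw [qintx, qintx, qintx, hsq, hsq, hsq_inv, ← zpow_ofNat, mul_comm, ← mul_neg]
  exact div_mul_div_cancel₀ h2

theorem IsGeneric.sq {x : K} (hx : IsGeneric x) : IsGeneric (x ^ 2) := fun n hn h =>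
  hx (2 * n) (by omega) (by rw [← qintx_two_mul_qintx_sq hx, h, mul_zero])

theorem qfactx_succ (x : K) (m : ℕ) : qfactx x (m + 1) = qfactx x m * qintx x ((m : ℤ) + 1) :=
  Finset.prod_range_succ _ _

theorem IsGeneric.qfactx_ne_zero {x : K} (hx : IsGeneric x) (m : ℕ) : qfactx x m ≠ 0 :=
  Finset.prod_ne_zero_iff.mpr fun j _ => hx _ (by omega)

end QuantumIntegers

section GaussianBinomials

theorem qbinomx_of_lt (x : K) {n u : ℕ} (h : n < u) : qbinomx x n u = 0 := if_neg h.not_ge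

theorem qbinomx_add (x : K) (u v : ℕ) :
    qbinomx x (u + v) u = qfactx x (u + v) / (qfactx x u * qfactx x v) := by
  rw [qbinomx, if_pos (Nat.le_add_right u v), Nat.add_sub_cancel_left]

theorem qbinomx_inv (x : K) (n u : ℕ) : qbinomx x⁻¹ n u = qbinomx x n u := by
  simp only [qbinomx, qfactx, qintx_inv]

/-- The Gaussian binomial coefficient at base `x` with an integral lower index, zero when that
index is negative, so that Pascal's rule has no boundary case. -/
def qbinomInt (x : K) (n : ℕ) (u : ℤ) : K := if 0 ≤ u then qbinomx x n u.toNat else 0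

@[simp]
theorem qbinomInt_natCast (x : K) (n u : ℕ) : qbinomInt x n u = qbinomx x n u := by
  simp [qbinomInt]

theorem qbinomInt_of_neg (x : K) (n : ℕ) {u : ℤ} (hu : u < 0) : qbinomInt x n u = 0 :=
  if_neg hu.not_ge

theorem qintx_mul_qbinomInt {x : K} (hx : IsGeneric x) (n : ℕ) (u : ℤ) :
    qintx x u * qbinomInt x n u = qintx x n * qbinomInt x (n - 1) (u - 1) := by
  rcases lt_or_ge u 0 with hu | hu
  · rw [qbinomInt_of_neg _ _ hu, qbinomInt_of_neg _ _ (by omega), mul_zero, mul_zero]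
  lift u to ℕ using hu
  rcases u with _ | u
  · rw [qbinomInt_of_neg x (n - 1) (by omega)]
    simp
  rw [Nat.cast_succ, add_sub_cancel_right, ← Nat.cast_succ, qbinomInt_natCast, qbinomInt_natCast]
  rcases lt_or_ge n (u + 1) with h | h
  · rw [qbinomx_of_lt _ h]
    rcases n with _ | n
    · simp
    · rw [Nat.add_sub_cancel, qbinomx_of_lt _ (by omega), mul_zero, mul_zero]
  · obtain ⟨v, rfl⟩ := Nat.exists_eq_add_of_le h
    have hu := hx.qfactx_ne_zero u
    have hv := hx.qfactx_ne_zero v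
    have hu1 : qintx x ((u : ℤ) + 1) ≠ 0 := hx _ (by omega)
    rw [show u + 1 + v - 1 = u + v by omega, qbinomx_add, qbinomx_add, qfactx_succ,
      show u + 1 + v = u + v + 1 by omega, qfactx_succ]
    push_cast
    field_simp

theorem qbinomInt_sub (x : K) (n : ℕ) (u : ℤ) : qbinomInt x n (n - u) = qbinomInt x n u := by
  have of_neg {v : ℤ} (hv : v < 0) : qbinomInt x n (n - v) = 0 := by
    rw [← Int.toNat_of_nonneg (show 0 ≤ n - v by omega), qbinomInt_natCast,
      qbinomx_of_lt _ (by omega)]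
  rcases lt_or_ge u 0 with hu | hu
  · rw [of_neg hu, qbinomInt_of_neg _ _ hu]
  rcases lt_or_ge (n - u : ℤ) 0 with hnu | hnu
  · rw [qbinomInt_of_neg _ _ hnu, ← of_neg hnu, sub_sub_cancel]
  lift u to ℕ using hu
  obtain ⟨v, rfl⟩ := Nat.exists_eq_add_of_le (show u ≤ n by omega)
  rw [Nat.cast_add, add_sub_cancel_left, qbinomInt_natCast, qbinomInt_natCast, qbinomx_add,
    add_comm u v, qbinomx_add, mul_comm]

theorem qintx_sub_mul_qbinomInt_succ {x : K} (hx : IsGeneric x) (n : ℕ) (u : ℤ) :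
    qintx x (n + 1 - u) * qbinomInt x (n + 1) u = qintx x (n + 1) * qbinomInt x n u := by
  have h := qintx_mul_qbinomInt hx (n + 1) (n + 1 - u)
  rw [Nat.add_sub_cancel, show (n + 1 - u - 1 : ℤ) = n - u by ring, qbinomInt_sub,
    ← Nat.cast_succ, qbinomInt_sub] at h
  exact_mod_cast h

theorem qintx_two_mul_qbinomInt_sq {x : K} (hx : IsGeneric x) (n : ℕ) (u : ℤ) :
    qintx x (2 * u) * qbinomInt (x ^ 2) n u =
      qintx x (2 * n) * qbinomInt (x ^ 2) (n - 1) (u - 1) := by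
  rw [← qintx_two_mul_qintx_sq hx, ← qintx_two_mul_qintx_sq hx, mul_assoc,
    qintx_mul_qbinomInt hx.sq, mul_assoc]

theorem qintx_mul_qbinomInt_sq_succ {x : K} (hx : IsGeneric x) (a : ℤ) (n : ℕ) (u : ℤ) :
    qintx x a * qbinomInt (x ^ 2) (n + 1) u =
      qintx x (a - 2 * u) * qbinomInt (x ^ 2) n u +
        qintx x (a + 2 * (n + 1) - 2 * u) * qbinomInt (x ^ 2) n (u - 1) := by
  have hlower := qintx_two_mul_qbinomInt_sq hx (n + 1) u
  have hupper : qintx x (2 * (n + 1) - 2 * u) * qbinomInt (x ^ 2) (n + 1) u =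
      qintx x (2 * (n + 1)) * qbinomInt (x ^ 2) n u := by
    rw [← mul_sub, ← qintx_two_mul_qintx_sq hx, ← qintx_two_mul_qintx_sq hx, mul_assoc, mul_assoc,
      qintx_sub_mul_qbinomInt_succ hx.sq]
  have hmul := qintx_mul_qintx hx.ne_zero a (2 * (n + 1)) (2 * u)
  rw [Nat.add_sub_cancel, Nat.cast_succ] at hlower
  refine mul_left_cancel₀ (hx (2 * (n + 1)) (by omega)) ?_
  linear_combination qbinomInt (x ^ 2) (n + 1) u * hmul + qintx x (a - 2 * u) * hupper +
    qintx x (a + 2 * (n + 1) - 2 * u) * hlower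

end GaussianBinomials

section Coefficients

theorem zmod_two_eq_zero_or_one (a : ZMod 2) : a = 0 ∨ a = 1 := by
  revert a
  decide

theorem zmod_two_add_one_eq_iff {a b : ZMod 2} : a + 1 = b ↔ a ≠ b := by
  revert a b
  decide

theorem zmod_two_sub_one_eq_iff {a b : ZMod 2} : a - 1 = b ↔ a ≠ b := by
  revert a b
  decide

/-- The coefficient of `(qZ)^u B^{(r)} B_j B^{(s)}` in `ytil` at `w = q^e`, divided by
`(-1)^r w^{-(m-2)(r+u)}`: only the parity of `r` remains relevant, since
`(m-1)(r+u) - r = (m-2)(r+u) + u` and `(m-3)(r+u) + r = (m-2)(r+u) - u`. -/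
def reducedCoeff (w : K) (p : ZMod 2) (m : ℕ) (u r : ℤ) : K :=
  if m % 2 = 0 then
    (if (r : ZMod 2) = p then w ^ u else w ^ (-u)) * qbinomInt (w ^ 2) ((m - 2) / 2) u
  else
    qbinomInt (w ^ 2) (if (r : ZMod 2) = p then (m - 3) / 2 else (m - 1) / 2) u

/-- The coefficient of `(qZ)^u B^{(r)} B_j B^{(s)}` in `ytil` at `w = q^e`, for all integers `u`
and `r`. -/
def ytilCoeff (w : K) (p : ZMod 2) (m : ℕ) (u r : ℤ) : K :=
  (-1) ^ r * w ^ (-(((m : ℤ) - 2) * (r + u))) * reducedCoeff w p m u r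

theorem reducedCoeff_even (w : K) (p : ZMod 2) {m k : ℕ} (hm : m = 2 * k + 2) (u r : ℤ) :
    reducedCoeff w p m u r =
      (if (r : ZMod 2) = p then w ^ u else w ^ (-u)) * qbinomInt (w ^ 2) k u := by
  rw [reducedCoeff, if_pos (by omega), show (m - 2) / 2 = k by omega]

theorem reducedCoeff_odd (w : K) (p : ZMod 2) {m k : ℕ} (hm : m = 2 * k + 1) (u r : ℤ) :
    reducedCoeff w p m u r = qbinomInt (w ^ 2) (if (r : ZMod 2) = p then k - 1 else k) u := by
  rw [reducedCoeff, if_neg (by omega), show (m - 3) / 2 = k - 1 by omega,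
    show (m - 1) / 2 = k by omega]

variable {w : K}

-- The next four identities are the cases of `reducedCoeff_rec`: `even` and `odd` refer to `m + 1`,
-- `eq` and `ne` to whether `r` is congruent to `p` modulo 2.
theorem qbinomInt_rec_even_eq (hw : IsGeneric w) {m : ℤ} {k : ℕ} (hm : m = 2 * k + 1) (u r : ℤ) :
    qintx w (m + 2) * (w ^ (-(r + u)) * qbinomInt (w ^ 2) k u) =
      w ^ u * qbinomInt (w ^ 2) k u * qintx w (m + 2 - 2 * u - r) +
        w ^ (-(m + 2)) * (w ^ (-u) * qbinomInt (w ^ 2) k u * qintx w r) +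
        w ^ (r + u - (m + 2)) * qintx w (m - 1) * qbinomInt (w ^ 2) (k - 1) (u - 1) := by
  have habsorb := qintx_two_mul_qbinomInt_sq hw k u
  have hsplit : w ^ (-(r + u)) * qintx w (m + 2) = w ^ u * qintx w (m + 2 - 2 * u - r) +
      w ^ (u - (m + 2)) * qintx w (2 * u + r) := by
    convert zpow_mul_qintx_add hw.ne_zero (m + 2 - 2 * u - r) (2 * u + r) (-(r + u)) using 3 <;>
      ring_nf
  have hsplit' : w ^ (u - (m + 2)) * qintx w (2 * u + r) =
      w ^ (r + u - (m + 2)) * qintx w (2 * u) + w ^ (-(m + 2)) * w ^ (-u) * qintx w r := by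
    rw [← zpow_add₀ hw.ne_zero]
    convert zpow_mul_qintx_add hw.ne_zero (2 * u) r (u - (m + 2)) using 3 <;> ring_nf
  rw [show m - 1 = 2 * k by omega]
  linear_combination qbinomInt (w ^ 2) k u * (hsplit + hsplit') + w ^ (r + u - (m + 2)) * habsorb

theorem qbinomInt_rec_even_ne (hw : IsGeneric w) {m : ℤ} {k : ℕ} (hm : m = 2 * k + 1) (u r : ℤ) :
    qintx w (m + 2) * (w ^ (-(r + u)) * qbinomInt (w ^ 2) (k + 1) u) =
      w ^ (-u) * qbinomInt (w ^ 2) k u * qintx w (m + 2 - 2 * u - r) +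
        w ^ (m - 1) * (w ^ (-(u - 1)) * qbinomInt (w ^ 2) k (u - 1) * qintx w (m + 3 - 2 * u - r)) +
        w ^ (-(m + 2)) * (w ^ u * qbinomInt (w ^ 2) k u * qintx w r) +
        w ^ (-(2 * m + 1)) * (w ^ (u - 1) * qbinomInt (w ^ 2) k (u - 1) * qintx w (r + 1)) +
        w ^ (r + u - (m + 2)) * qintx w (m - 1) * qbinomInt (w ^ 2) k (u - 1) := by
  have hpascal := qintx_mul_qbinomInt_sq_succ hw (m + 2) k u
  rw [show m + 2 + 2 * (k + 1) - 2 * u = 2 * m + 3 - 2 * u by omega] at hpascal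
  have hsplit : w ^ (-(r + u)) * qintx w (m + 2 - 2 * u) =
      w ^ (-u) * qintx w (m + 2 - 2 * u - r) + w ^ (-(m + 2)) * w ^ u * qintx w r := by
    rw [← zpow_add₀ hw.ne_zero]
    convert zpow_mul_qintx_add hw.ne_zero (m + 2 - 2 * u - r) r (-(r + u)) using 3 <;> ring_nf
  have hsplit' : w ^ (-(r + u)) * qintx w (2 * m + 3 - 2 * u) =
      w ^ (-(u - 1)) * qintx w (2 * m + 2 - 2 * u - r) +
        w ^ (-(2 * m + 1)) * w ^ (u - 1) * qintx w (r + 1) := by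
    rw [← zpow_add₀ hw.ne_zero]
    convert zpow_mul_qintx_add hw.ne_zero (2 * m + 2 - 2 * u - r) (r + 1) (-(r + u)) using 3 <;>
      ring_nf
  have hsplit'' : w ^ (-(u - 1)) * qintx w (2 * m + 2 - 2 * u - r) =
      w ^ (m - 1) * w ^ (-(u - 1)) * qintx w (m + 3 - 2 * u - r) +
        w ^ (r + u - (m + 2)) * qintx w (m - 1) := by
    rw [← zpow_add₀ hw.ne_zero]
    convert zpow_mul_qintx_add hw.ne_zero (m + 3 - 2 * u - r) (m - 1) (-(u - 1)) using 3 <;> ring_nf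
  linear_combination w ^ (-(r + u)) * hpascal + qbinomInt (w ^ 2) k u * hsplit +
    qbinomInt (w ^ 2) k (u - 1) * (hsplit' + hsplit'')

theorem qbinomInt_rec_odd_eq (hw : IsGeneric w) {m : ℤ} {k : ℕ} (hm : m = 2 * k + 2) (u r : ℤ) :
    qintx w (m + 2) * (w ^ (-(r + u)) * (w ^ u * qbinomInt (w ^ 2) (k + 1) u)) =
      qbinomInt (w ^ 2) k u * qintx w (m + 2 - 2 * u - r) +
        w ^ (m - 1) * (qbinomInt (w ^ 2) k (u - 1) * qintx w (m + 3 - 2 * u - r)) +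
        w ^ (-(m + 2)) * (qbinomInt (w ^ 2) (k + 1) u * qintx w r) +
        w ^ (r + u - (m + 2)) * qintx w (m - 1) *
          (w ^ (u - 1) * qbinomInt (w ^ 2) k (u - 1)) := by
  have hpascal := qintx_mul_qbinomInt_sq_succ hw (m + 2 - r) k u
  rw [show m + 2 - r - 2 * u = m + 2 - 2 * u - r by ring,
    show m + 2 - r + 2 * (k + 1) - 2 * u = m + 3 - 2 * u - r + (m - 1) by omega] at hpascal
  have hsub := qintx_sub hw.ne_zero (m + 2) r
  have hadd := qintx_add hw.ne_zero (m + 3 - 2 * u - r) (m - 1)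
  have hpow : w ^ (-(r + u)) * w ^ u = w ^ (-r) := by
    rw [← zpow_add₀ hw.ne_zero]
    ring_nf
  have hpow' : w ^ (r + u - (m + 2)) * w ^ (u - 1) = w ^ (-(m + 3 - 2 * u - r)) := by
    rw [← zpow_add₀ hw.ne_zero]
    ring_nf
  linear_combination hpascal - qbinomInt (w ^ 2) (k + 1) u * hsub +
    qbinomInt (w ^ 2) k (u - 1) * hadd + qintx w (m + 2) * qbinomInt (w ^ 2) (k + 1) u * hpow -
    qintx w (m - 1) * qbinomInt (w ^ 2) k (u - 1) * hpow'

theorem qbinomInt_rec_odd_ne (hw : IsGeneric w) {m : ℤ} {k : ℕ} (hm : m = 2 * k + 2) (u r : ℤ) :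
    qintx w (m + 2) * (w ^ (-(r + u)) * (w ^ (-u) * qbinomInt (w ^ 2) (k + 1) u)) =
      qbinomInt (w ^ 2) (k + 1) u * qintx w (m + 2 - 2 * u - r) +
        w ^ (-(m + 2)) * (qbinomInt (w ^ 2) k u * qintx w r) +
        w ^ (-(2 * m + 1)) * (qbinomInt (w ^ 2) k (u - 1) * qintx w (r + 1)) +
        w ^ (r + u - (m + 2)) * qintx w (m - 1) *
          (w ^ (-(u - 1)) * qbinomInt (w ^ 2) k (u - 1)) := by
  have hpascal := qintx_mul_qbinomInt_sq_succ hw (2 * u + r) k u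
  rw [add_sub_cancel_left,
    show 2 * u + r + 2 * (k + 1) - 2 * u = m - 1 + (r + 1) by omega] at hpascal
  have hsub : qintx w (m + 2 - 2 * u - r) =
      w ^ (-(2 * u + r)) * qintx w (m + 2) - w ^ (-(m + 2)) * qintx w (2 * u + r) := by
    rw [← qintx_sub hw.ne_zero, sub_sub]
  have hadd : w ^ (-(m + 2)) * qintx w (m - 1 + (r + 1)) =
      w ^ (r + u - (m + 2)) * w ^ (-(u - 1)) * qintx w (m - 1) +
        w ^ (-(2 * m + 1)) * qintx w (r + 1) := by
    rw [← zpow_add₀ hw.ne_zero]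
    convert zpow_mul_qintx_add hw.ne_zero (m - 1) (r + 1) (-(m + 2)) using 3 <;> ring_nf
  have hpow : w ^ (-(r + u)) * w ^ (-u) = w ^ (-(2 * u + r)) := by
    rw [← zpow_add₀ hw.ne_zero]
    ring_nf
  linear_combination w ^ (-(m + 2)) * hpascal - qbinomInt (w ^ 2) (k + 1) u * hsub +
    qbinomInt (w ^ 2) k (u - 1) * hadd + qintx w (m + 2) * qbinomInt (w ^ 2) (k + 1) u * hpow

theorem reducedCoeff_rec (hw : IsGeneric w) (p : ZMod 2) {m : ℕ} (hm : 1 ≤ m) (u r : ℤ) :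
    qintx w (m + 2) * (w ^ (-(r + u)) * reducedCoeff w p (m + 2) u r) =
      reducedCoeff w p (m + 1) u r * qintx w (m + 2 - 2 * u - r) +
        w ^ ((m : ℤ) - 1) * (reducedCoeff w p (m + 1) (u - 1) r *
          if ((m + 3 - 2 * u - r : ℤ) : ZMod 2) = p + 1 then qintx w (m + 3 - 2 * u - r) else 0) +
        w ^ (-(m + 2) : ℤ) * (reducedCoeff w p (m + 1) u (r - 1) * qintx w r) +
        w ^ (-(2 * m + 1) : ℤ) * (reducedCoeff w p (m + 1) (u - 1) (r + 1) *
          if ((r + 1 : ℤ) : ZMod 2) = p then qintx w (r + 1) else 0) +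
        w ^ (r + u - (m + 2)) * qintx w (m - 1) * reducedCoeff w p m (u - 1) r := by
  have hsucc : ((r + 1 : ℤ) : ZMod 2) = p ↔ (r : ZMod 2) ≠ p := by
    rw [Int.cast_add, Int.cast_one, zmod_two_add_one_eq_iff]
  have hpred : ((r - 1 : ℤ) : ZMod 2) = p ↔ (r : ZMod 2) ≠ p := by
    rw [Int.cast_sub, Int.cast_one, zmod_two_sub_one_eq_iff]
  obtain ⟨k, hk | hk⟩ : ∃ k, m = 2 * k + 1 ∨ m = 2 * k + 2 := ⟨(m - 1) / 2, by omega⟩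
  · have hs : ((m + 3 - 2 * u - r : ℤ) : ZMod 2) = p + 1 ↔ (r : ZMod 2) ≠ p := by
      have hcast : ((m + 3 - 2 * u - r : ℤ) : ZMod 2) = r :=
        (ZMod.intCast_eq_intCast_iff _ _ 2).mpr (by unfold Int.ModEq; omega)
      rw [hcast, eq_comm, zmod_two_add_one_eq_iff, ne_comm]
    simp only [reducedCoeff_odd w p (show m + 2 = 2 * (k + 1) + 1 by omega),
      reducedCoeff_even w p (show m + 1 = 2 * k + 2 by omega), reducedCoeff_odd w p hk,
      hs, hsucc, hpred]
    by_cases hr : (r : ZMod 2) = p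
    · simpa [hr] using qbinomInt_rec_even_eq hw (m := m) (by omega) u r
    · simpa [hr] using qbinomInt_rec_even_ne hw (m := m) (by omega) u r
  · have hs : ((m + 3 - 2 * u - r : ℤ) : ZMod 2) = p + 1 ↔ (r : ZMod 2) = p := by
      have hcast : ((m + 3 - 2 * u - r : ℤ) : ZMod 2) = (r + 1 : ℤ) :=
        (ZMod.intCast_eq_intCast_iff _ _ 2).mpr (by unfold Int.ModEq; omega)
      rw [hcast, Int.cast_add, Int.cast_one, add_left_inj]
    simp only [reducedCoeff_even w p (show m + 2 = 2 * (k + 1) + 2 by omega),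
      reducedCoeff_odd w p (show m + 1 = 2 * (k + 1) + 1 by omega), reducedCoeff_even w p hk,
      hs, hsucc, hpred]
    by_cases hr : (r : ZMod 2) = p
    · simpa [hr] using qbinomInt_rec_odd_eq hw (m := m) (by omega) u r
    · simpa [hr] using qbinomInt_rec_odd_ne hw (m := m) (by omega) u r

theorem ytilCoeff_eq_mul (hw : w ≠ 0) (p : ZMod 2) (m : ℕ) (u r : ℤ) {a b : ℤ}
    (h : -(((m : ℤ) - 2) * (r + u)) = a + b) :
    ytilCoeff w p m u r = (-1) ^ r * w ^ a * (w ^ b * reducedCoeff w p m u r) := by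
  rw [ytilCoeff, h, zpow_add₀ hw]
  ring

theorem ytilCoeff_rec (hw : IsGeneric w) (p : ZMod 2) {m : ℕ} (hm : 1 ≤ m) (u r : ℤ) :
    qintx w (m + 2) * ytilCoeff w p (m + 2) u r =
      (ytilCoeff w p (m + 1) u r * qintx w (m + 2 - 2 * u - r) +
        ytilCoeff w p (m + 1) (u - 1) r *
          if ((m + 3 - 2 * u - r : ℤ) : ZMod 2) = p + 1 then qintx w (m + 3 - 2 * u - r) else 0) -
        w ^ (-(2 * m + 1) : ℤ) * (ytilCoeff w p (m + 1) u (r - 1) * qintx w r +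
          ytilCoeff w p (m + 1) (u - 1) (r + 1) *
            if ((r + 1 : ℤ) : ZMod 2) = p then qintx w (r + 1) else 0) +
        w ^ (-(2 * m) : ℤ) * qintx w (m - 1) * ytilCoeff w p m (u - 1) r := by
  have hneg : (-1 : K) ≠ 0 := neg_ne_zero.mpr one_ne_zero
  have hcoeff := ytilCoeff_eq_mul hw.ne_zero p
  have hzero : w ^ (-(2 * m) : ℤ) * ytilCoeff w p m (u - 1) r =
      (-1) ^ r * w ^ (-((m - 1) * (r + u))) *
        (w ^ (r + u - (m + 2)) * reducedCoeff w p m (u - 1) r) := by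
    rw [hcoeff m (u - 1) r (a := 2 * m) (b := -((m - 1) * (r + u)) + (r + u - (m + 2))) (by ring),
      zpow_add₀ hw.ne_zero, zpow_neg]
    field_simp [hw.ne_zero]
  have hpow : w ^ (-(2 * m + 1) : ℤ) * w ^ ((m : ℤ) - 1) = w ^ (-(m + 2) : ℤ) := by
    rw [← zpow_add₀ hw.ne_zero]
    ring_nf
  rw [hcoeff (m + 2) u r (a := -((m - 1) * (r + u))) (b := -(r + u)) (by push_cast; ring),
    hcoeff (m + 1) u r (a := -((m - 1) * (r + u))) (b := 0) (by push_cast; ring),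
    hcoeff (m + 1) (u - 1) r (a := -((m - 1) * (r + u))) (b := m - 1) (by push_cast; ring),
    hcoeff (m + 1) u (r - 1) (a := -((m - 1) * (r + u))) (b := m - 1) (by push_cast; ring),
    hcoeff (m + 1) (u - 1) (r + 1) (a := -((m - 1) * (r + u))) (b := 0) (by push_cast; ring),
    zpow_sub_one₀ hneg, zpow_add_one₀ hneg, zpow_zero]
  linear_combination (-1) ^ r * w ^ (-((m - 1) * (r + u))) * (reducedCoeff_rec hw p hm u r -
    reducedCoeff w p (m + 1) u (r - 1) * qintx w r * hpow) - qintx w (m - 1) * hzero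

end Coefficients

section IDividedPowers

variable {A : Type*} [Ring A] [Algebra K A] {B Z : A}

/-- The product `∏_{j < n} (B² - [f j]² q Z)`; the closed formulas for the ı-divided powers are
built from its instances with `f j` equal to `2j`, `2j + 1` and `2j + 2`. -/
def shiftedProd (B Z : A) (f : ℕ → ℤ) (n : ℕ) : A :=
  ((List.range n).map fun j => B ^ 2 - (qint (f j) ^ 2 * qq) • Z).prod

/-- The ı-divided power without its quantum factorial, `[m]! B^{(m)}`. -/
def iProd (B Z : A) (p : ZMod 2) (m : ℕ) : A :=
  (if m % 2 = 1 then B else 1) *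
    shiftedProd B Z (fun j => if p = 1 then 2 * (j : ℤ) + 1
      else if m % 2 = 1 then 2 * (j : ℤ) + 2 else 2 * (j : ℤ)) (m / 2)

theorem iDP_eq_smul_iProd (B Z : A) (p : ZMod 2) (m : ℕ) :
    iDP B Z p m = (qfact m)⁻¹ • iProd B Z p m := by
  simp [iDP, iProd, shiftedProd, ← List.map_eq_flatMap, Function.comp_def]

theorem iProd_one_even (B Z : A) (n : ℕ) :
    iProd B Z 1 (2 * n) = shiftedProd B Z (fun j => 2 * j + 1) n := by
  simp [iProd]

theorem iProd_one_odd (B Z : A) (n : ℕ) :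
    iProd B Z 1 (2 * n + 1) = B * shiftedProd B Z (fun j => 2 * j + 1) n := by
  simp [iProd, show (2 * n + 1) / 2 = n by omega]

theorem iProd_zero_even (B Z : A) (n : ℕ) :
    iProd B Z 0 (2 * n) = shiftedProd B Z (fun j => 2 * j) n := by
  simp [iProd]

theorem iProd_zero_odd (B Z : A) (n : ℕ) :
    iProd B Z 0 (2 * n + 1) = B * shiftedProd B Z (fun j => 2 * j + 2) n := by
  simp [iProd, show (2 * n + 1) / 2 = n by omega]

theorem iProd_zero_even_succ (B Z : A) (n : ℕ) :
    iProd B Z 0 (2 * n + 2) = B * iProd B Z 0 (2 * n + 1) := by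
  rw [show 2 * n + 2 = 2 * (n + 1) by ring, iProd_zero_even, iProd_zero_odd, shiftedProd,
    List.range_succ_eq_map, List.map_cons, List.prod_cons, List.map_map, ← mul_assoc, ← pow_two]
  simp [shiftedProd, qint, Function.comp_def, mul_add]

theorem iDP_zero (B Z : A) (p : ZMod 2) : iDP B Z p 0 = 1 := by
  simp [iDP, qfact, qfactx]

theorem iDP_one (B Z : A) (p : ZMod 2) : iDP B Z p 1 = B := by
  simp [iDP, qfact, qfactx, qintx_one isGeneric_qq]

theorem commute_shiftedProd (hZ : ∀ a : A, Commute Z a) (f : ℕ → ℤ) (n : ℕ) :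
    Commute B (shiftedProd B Z f n) := by
  refine Commute.list_prod_right _ _ fun x hx => ?_
  obtain ⟨j, -, rfl⟩ := List.mem_map.mp hx
  exact ((Commute.refl B).pow_right 2).sub_right (Commute.smul_right (hZ B).symm _)

theorem commute_iDP (hZ : ∀ a : A, Commute Z a) (p : ZMod 2) (m : ℕ) :
    Commute B (iDP B Z p m) := by
  rw [iDP_eq_smul_iProd]
  refine Commute.smul_right (Commute.mul_right ?_ (commute_shiftedProd hZ _ _)) _
  split_ifs
  · exact Commute.refl B
  · exact Commute.one_right B

theorem mul_mul_shiftedProd (hZ : ∀ a : A, Commute Z a) (f : ℕ → ℤ) (n : ℕ) :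
    B * (B * shiftedProd B Z f n) =
      shiftedProd B Z f (n + 1) + qint (f n) ^ 2 • (qq • Z * shiftedProd B Z f n) := by
  have hsucc : shiftedProd B Z f (n + 1) =
      (B ^ 2 - (qint (f n) ^ 2 * qq) • Z) * shiftedProd B Z f n := by
    have hcomm : Commute (B ^ 2 - (qint (f n) ^ 2 * qq) • Z) (shiftedProd B Z f n) :=
      ((commute_shiftedProd hZ f n).pow_left 2).sub_left ((hZ _).smul_left _)
    rw [hcomm.eq, shiftedProd, List.range_succ, List.map_append, List.prod_append,
      List.map_singleton, List.prod_singleton, shiftedProd]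
  rw [hsucc, sub_mul, ← mul_assoc, ← pow_two, mul_smul, smul_mul_assoc, sub_add_cancel]

theorem mul_iProd (hZ : ∀ a : A, Commute Z a) (p : ZMod 2) (m : ℕ) :
    B * iProd B Z p m = iProd B Z p (m + 1) +
      (if (m : ZMod 2) = p then qint m ^ 2 else 0) • (qq • Z * iProd B Z p (m - 1)) := by
  have heven (n : ℕ) : ((2 * n : ℕ) : ZMod 2) = 0 := (ZMod.natCast_eq_zero_iff _ _).mpr ⟨n, rfl⟩
  have hodd (n : ℕ) : ((2 * n + 1 : ℕ) : ZMod 2) = 1 := by rw [Nat.cast_succ, heven, zero_add]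
  obtain ⟨n, rfl | rfl⟩ : ∃ n, m = 2 * n ∨ m = 2 * n + 1 := ⟨m / 2, by omega⟩ <;>
    obtain rfl | rfl := zmod_two_eq_zero_or_one p
  · rw [heven, if_pos rfl]
    rcases n with _ | n
    · simp [iProd, shiftedProd, qint]
    · have hcomm : B * (qq • Z) = qq • Z * B := ((hZ B).symm.smul_right qq).eq
      rw [show 2 * (n + 1) = 2 * n + 2 by ring, iProd_zero_even_succ, iProd_zero_odd,
        show 2 * n + 2 + 1 = 2 * (n + 1) + 1 by ring, iProd_zero_odd, mul_mul_shiftedProd hZ,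
        mul_add, mul_smul_comm, ← mul_assoc B (qq • Z), hcomm, mul_assoc (qq • Z),
        show 2 * n + 2 - 1 = 2 * n + 1 by omega, iProd_zero_odd]
      norm_cast
  · rw [heven, if_neg (by decide), zero_smul, add_zero, iProd_one_even, iProd_one_odd]
  · rw [hodd, if_neg (by decide), zero_smul, add_zero, iProd_zero_even_succ]
  · rw [hodd, if_pos rfl, show 2 * n + 1 + 1 = 2 * (n + 1) by ring, Nat.add_sub_cancel,
      iProd_one_odd, iProd_one_even, iProd_one_even, mul_mul_shiftedProd hZ]
    norm_cast

theorem mul_iDP (hZ : ∀ a : A, Commute Z a) (p : ZMod 2) (m : ℕ) :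
    B * iDP B Z p m = qint (m + 1) • iDP B Z p (m + 1) +
      (if (m : ZMod 2) = p then qint m else 0) • (qq • Z * iDP B Z p (m - 1)) := by
  have hfact (n : ℕ) : qfact n ≠ 0 := isGeneric_qq.qfactx_ne_zero n
  have hint (n : ℕ) : qint ((n : ℤ) + 1) ≠ 0 := isGeneric_qq _ (by omega)
  have hfact_succ (n : ℕ) : qfact (n + 1) = qfact n * qint (n + 1) := qfactx_succ qq n
  have hm := hfact m
  have hm' := hint m
  simp only [iDP_eq_smul_iProd]
  rw [mul_smul_comm, mul_iProd hZ, hfact_succ, smul_add, smul_smul, smul_smul, mul_smul_comm,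
    smul_smul]
  congr 2
  · field_simp
  · split_ifs
    · rcases m with _ | m
      · simp [qint]
      · have hm := hfact m
        have hm' := hint m
        rw [hfact_succ]
        push_cast
        field_simp
    · simp

theorem qint_two_smul_iDP_two (hZ : ∀ a : A, Commute Z a) (p : ZMod 2) :
    qint 2 • iDP B Z p 2 = B ^ 2 - if p = 1 then qq • Z else 0 := by
  have hmul := mul_iDP (B := B) hZ p 1
  rw [iDP_one, ← pow_two, Nat.cast_one, one_add_one_eq_two, Nat.cast_one] at hmul
  rw [hmul, eq_sub_iff_add_eq]
  simp [iDP_zero, qint, qintx_one isGeneric_qq, eq_comm]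

/-- The ı-divided power `B^{(m)}` with an integral index, zero when that index is negative, so that
the recursion for multiplication by `B` has no boundary case. -/
def iDPInt (B Z : A) (p : ZMod 2) (m : ℤ) : A := if 0 ≤ m then iDP B Z p m.toNat else 0

theorem iDPInt_natCast (B Z : A) (p : ZMod 2) (m : ℕ) : iDPInt B Z p m = iDP B Z p m := by
  simp [iDPInt]

theorem iDPInt_of_neg (B Z : A) (p : ZMod 2) {m : ℤ} (hm : m < 0) : iDPInt B Z p m = 0 :=
  if_neg hm.not_ge

theorem mul_iDPInt (hZ : ∀ a : A, Commute Z a) (p : ZMod 2) (m : ℤ) :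
    B * iDPInt B Z p m = qint (m + 1) • iDPInt B Z p (m + 1) +
      (if (m : ZMod 2) = p then qint m else 0) • (qq • Z * iDPInt B Z p (m - 1)) := by
  rcases lt_or_ge m 0 with hm | hm
  · rw [iDPInt_of_neg _ _ _ hm, iDPInt_of_neg B Z p (show m - 1 < 0 by omega)]
    rcases lt_or_ge (m + 1) 0 with hm' | hm'
    · rw [iDPInt_of_neg _ _ _ hm', mul_zero, mul_zero, smul_zero, smul_zero, add_zero]
    · simp [show m + 1 = 0 by omega, qint]
  lift m to ℕ using hm
  have hpred : qint m • (qq • Z * iDPInt B Z p (m - 1)) =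
      qint m • (qq • Z * iDP B Z p (m - 1)) := by
    rcases m with _ | m
    · simp [qint]
    · rw [Nat.cast_succ, add_sub_cancel_right, iDPInt_natCast, Nat.add_sub_cancel]
  rw [← Nat.cast_succ, iDPInt_natCast, iDPInt_natCast, mul_iDP hZ, ite_smul, ite_smul,
    Int.cast_natCast, hpred, Nat.cast_succ, zero_smul, zero_smul]

theorem commute_iDPInt (hZ : ∀ a : A, Commute Z a) (p : ZMod 2) (m : ℤ) :
    Commute B (iDPInt B Z p m) := by
  rw [iDPInt]
  split_ifs
  · exact commute_iDP hZ p _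
  · exact Commute.zero_right B

end IDividedPowers

section Sums

theorem sum_range_succ_eq_sum_range {M : Type*} [AddCommGroup M] {f : ℕ → M} {n : ℕ}
    (h : f n = f 0) :
    ∑ i ∈ Finset.range n, f (i + 1) = ∑ i ∈ Finset.range n, f i := by
  rw [← add_left_inj (f 0), ← Finset.sum_range_succ', Finset.sum_range_succ, h]

variable {A : Type*} [Ring A] [Algebra K A] {B C Z : A}

/-- The element `(qZ)^u B^{(r)} B_j B^{(s)}`, with `C` in the role of `B_j`. -/
def ytilTerm (B C Z : A) (p : ZMod 2) (u : ℕ) (r s : ℤ) : A :=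
  (qq • Z) ^ u * (iDPInt B Z p r * C * iDPInt B Z (p + 1) s)

theorem ytilTerm_of_neg (B C Z : A) (p : ZMod 2) (u : ℕ) (r : ℤ) {s : ℤ} (hs : s < 0) :
    ytilTerm B C Z p u r s = 0 := by
  rw [ytilTerm, iDPInt_of_neg _ _ _ hs, mul_zero, mul_zero]

theorem smul_mul_ytilTerm (p : ZMod 2) (u : ℕ) (r s : ℤ) :
    qq • Z * ytilTerm B C Z p u r s = ytilTerm B C Z p (u + 1) r s := by
  rw [ytilTerm, ytilTerm, pow_succ', mul_assoc (qq • Z)]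

theorem mul_ytilTerm (hZ : ∀ a : A, Commute Z a) (p : ZMod 2) (u : ℕ) (r s : ℤ) :
    B * ytilTerm B C Z p u r s = qint (r + 1) • ytilTerm B C Z p u (r + 1) s +
      (if (r : ZMod 2) = p then qint r else 0) • ytilTerm B C Z p (u + 1) (r - 1) s := by
  have hcomm : Commute B ((qq • Z) ^ u) := ((hZ B).symm.smul_right qq).pow_right u
  rw [ytilTerm, hcomm.left_comm, ← mul_assoc B, ← mul_assoc B, mul_iDPInt hZ]
  simp only [ytilTerm, add_mul, mul_add, smul_mul_assoc, mul_smul_comm, pow_succ, mul_assoc]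

theorem ytilTerm_mul (hZ : ∀ a : A, Commute Z a) (p : ZMod 2) (u : ℕ) (r s : ℤ) :
    ytilTerm B C Z p u r s * B = qint (s + 1) • ytilTerm B C Z p u r (s + 1) +
      (if (s : ZMod 2) = p + 1 then qint s else 0) • ytilTerm B C Z p (u + 1) r (s - 1) := by
  have hcomm (a : A) : Commute a (qq • Z) := (hZ a).symm.smul_right qq
  rw [ytilTerm, mul_assoc, mul_assoc, ← (commute_iDPInt hZ (p + 1) s).eq, mul_iDPInt hZ, mul_add,
    mul_add, mul_smul_comm, mul_smul_comm, mul_smul_comm, mul_smul_comm,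
    (hcomm _).left_comm, ytilTerm, ytilTerm, pow_succ, mul_assoc ((qq • Z) ^ u)]

/-- The linear combination `∑ c(u, r) (qZ)^u B^{(r)} B_j B^{(M-2u-r)}` over `u, r < N`. For `M < N`
it involves all its nonzero terms with `u, r ≥ 0`, because `B^{(s)} = 0` for `s < 0`. -/
def ytilSum (B C Z : A) (p : ZMod 2) (N M : ℕ) : (ℤ → ℤ → K) →ₗ[K] A where
  toFun c := ∑ u ∈ Finset.range N, ∑ r ∈ Finset.range N,
    c u r • ytilTerm B C Z p u r (M - 2 * u - r)
  map_add' c d := by simp only [Pi.add_apply, add_smul, Finset.sum_add_distrib]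
  map_smul' a c := by
    simp only [Pi.smul_apply, smul_eq_mul, mul_smul, Finset.smul_sum, RingHom.id_apply]

theorem ytilSum_apply (B C Z : A) (p : ZMod 2) (N M : ℕ) (c : ℤ → ℤ → K) :
    ytilSum B C Z p N M c = ∑ u ∈ Finset.range N, ∑ r ∈ Finset.range N,
      c u r • ytilTerm B C Z p u r (M - 2 * u - r) := rfl

theorem sum_range_smul_ytilTerm_succ (p : ZMod 2) {N : ℕ} {M : ℤ} (hM : M < 2 * N) {c : ℤ → ℤ → K}
    (hc : ∀ r, c (-1) r = 0) :
    ∑ u ∈ Finset.range N, ∑ r ∈ Finset.range N,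
        c u r • ytilTerm B C Z p (u + 1) r (M - 2 * (u + 1) - r) =
      ∑ u ∈ Finset.range N, ∑ r ∈ Finset.range N,
        c (u - 1) r • ytilTerm B C Z p u r (M - 2 * u - r) := by
  rw [← sum_range_succ_eq_sum_range (f := fun u : ℕ => ∑ r ∈ Finset.range N,
    c (u - 1) r • ytilTerm B C Z p u r (M - 2 * u - r))]
  · simp
  · rw [Finset.sum_eq_zero, Finset.sum_eq_zero]
    · simp [hc]
    · intro r _
      rw [ytilTerm_of_neg _ _ _ _ _ _ (by omega), smul_zero]

theorem sum_range_smul_ytilTerm_add_one (p : ZMod 2) (u : ℕ) (a : ℤ) {N : ℕ} {s : ℤ} (hs : s < N)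
    {d : ℤ → K} (hd : d 0 = 0) :
    ∑ r ∈ Finset.range N, d (r + 1) • ytilTerm B C Z p u (r + 1 + a) (s - (r + 1)) =
      ∑ r ∈ Finset.range N, d r • ytilTerm B C Z p u (r + a) (s - r) := by
  rw [← sum_range_succ_eq_sum_range (f := fun r : ℕ => d r • ytilTerm B C Z p u (r + a) (s - r))]
  · simp only [Nat.cast_succ]
  · rw [ytilTerm_of_neg _ _ _ _ _ _ (by omega), smul_zero, Nat.cast_zero, hd, zero_smul]

theorem smul_mul_ytilSum (p : ZMod 2) {N M : ℕ} (hN : M + 2 < 2 * N) {c : ℤ → ℤ → K}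
    (hc : ∀ r, c (-1) r = 0) :
    qq • Z * ytilSum B C Z p N M c = ytilSum B C Z p N (M + 2) fun u r => c (u - 1) r := by
  rw [ytilSum_apply, ytilSum_apply, ← sum_range_smul_ytilTerm_succ p (by omega) hc, Finset.mul_sum]
  refine Finset.sum_congr rfl fun u _ => ?_
  rw [Finset.mul_sum]
  refine Finset.sum_congr rfl fun r _ => ?_
  rw [mul_smul_comm, smul_mul_ytilTerm]
  congr 2
  push_cast
  ring

theorem ytilSum_mul (hZ : ∀ a : A, Commute Z a) (p : ZMod 2) {N M : ℕ} (hN : M + 1 < 2 * N)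
    {c : ℤ → ℤ → K} (hc : ∀ r, c (-1) r = 0) :
    ytilSum B C Z p N M c * B = ytilSum B C Z p N (M + 1) fun u r =>
      c u r * qint (M + 1 - 2 * u - r) + c (u - 1) r *
        if ((M + 2 - 2 * u - r : ℤ) : ZMod 2) = p + 1 then qint (M + 2 - 2 * u - r) else 0 := by
  have hshift := sum_range_smul_ytilTerm_succ (B := B) (C := C) (Z := Z) p
    (N := N) (M := M + 1) (by omega) (c := fun u r => c u r *
      if ((M - 2 * u - r : ℤ) : ZMod 2) = p + 1 then qint (M - 2 * u - r) else 0) (by simp [hc])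
  have hsub (u r : ℤ) : (M : ℤ) - 2 * (u - 1) - r = M + 2 - 2 * u - r := by ring
  simp only [hsub] at hshift
  simp only [ytilSum_apply, add_smul, Finset.sum_add_distrib, Nat.cast_succ]
  rw [← hshift, Finset.sum_mul, ← Finset.sum_add_distrib]
  refine Finset.sum_congr rfl fun u _ => ?_
  rw [Finset.sum_mul, ← Finset.sum_add_distrib]
  refine Finset.sum_congr rfl fun r _ => ?_
  rw [smul_mul_assoc, ytilTerm_mul hZ, smul_add, smul_smul, smul_smul,
    show (M : ℤ) - 2 * u - r + 1 = M + 1 - 2 * u - r by ring,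
    show (M : ℤ) - 2 * u - r - 1 = M + 1 - 2 * (u + 1) - r by ring]

theorem mul_ytilSum (hZ : ∀ a : A, Commute Z a) (p : ZMod 2) {N M : ℕ} (hN : M + 1 < N)
    {c : ℤ → ℤ → K} (hc : ∀ r, c (-1) r = 0) :
    B * ytilSum B C Z p N M c = ytilSum B C Z p N (M + 1) fun u r =>
      c u (r - 1) * qint r +
        c (u - 1) (r + 1) * if ((r + 1 : ℤ) : ZMod 2) = p then qint (r + 1) else 0 := by
  have hraise (u : ℕ) := sum_range_smul_ytilTerm_add_one (B := B) (C := C) (Z := Z) p u 0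
    (N := N) (s := M + 1 - 2 * u) (by omega) (d := fun r => c u (r - 1) * qint r) (by simp [qint])
  have hlower (u : ℕ) := sum_range_smul_ytilTerm_add_one (B := B) (C := C) (Z := Z) p (u + 1) (-1)
    (N := N) (s := M - 2 * u) (by omega)
    (d := fun r => c u r * if (r : ZMod 2) = p then qint r else 0) (by simp [qint])
  have hshift := sum_range_smul_ytilTerm_succ (B := B) (C := C) (Z := Z) p
    (N := N) (M := M + 1) (by omega) (c := fun u r => c u (r + 1) *
      if ((r + 1 : ℤ) : ZMod 2) = p then qint (r + 1) else 0) (by simp [hc])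
  simp only [ytilSum_apply, add_smul, Finset.sum_add_distrib, Nat.cast_succ]
  rw [← hshift, Finset.mul_sum, ← Finset.sum_add_distrib]
  refine Finset.sum_congr rfl fun u _ => ?_
  simp only [add_zero, add_sub_cancel_right, ← sub_eq_add_neg] at hraise hlower
  have hindex (r : ℕ) : (M : ℤ) + 1 - 2 * (u + 1) - r = M - 2 * u - (r + 1) := by ring
  simp only [hindex]
  rw [← hraise, hlower, Finset.mul_sum, ← Finset.sum_add_distrib]
  refine Finset.sum_congr rfl fun r _ => ?_
  rw [mul_smul_comm, mul_ytilTerm hZ, smul_add, smul_smul, smul_smul,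
    show (M : ℤ) + 1 - 2 * u - (r + 1) = M - 2 * u - r by ring]

end Sums

section Recursion

variable {A : Type*} [Ring A] [Algebra K A] {B C Z : A}

theorem ytilCoeff_of_neg (w : K) (p : ZMod 2) (m : ℕ) {u : ℤ} (hu : u < 0) (r : ℤ) :
    ytilCoeff w p m u r = 0 := by
  simp [ytilCoeff, reducedCoeff, qbinomInt_of_neg _ _ hu]

theorem qintx_qq_zpow {e : ℤ} (he : e = 1 ∨ e = -1) (n : ℤ) : qintx (qq ^ e) n = qint n := by
  rcases he with rfl | rfl <;> simp [qint]

theorem qbinomInt_qq_zpow_sq {e : ℤ} (he : e = 1 ∨ e = -1) (n u : ℕ) :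
    qbinomInt ((qq ^ e) ^ 2) n u = qbinomx (qq ^ 2) n u := by
  rcases he with rfl | rfl
  · simp
  · rw [qbinomInt_natCast, zpow_neg_one, inv_pow, qbinomx_inv]

theorem ytilCoeff_qq_zpow {e : ℤ} (he : e = 1 ∨ e = -1) (p : ZMod 2) (m u r : ℕ) :
    ytilCoeff (qq ^ e) p m u r =
      if m % 2 = 0 then
        (if (r : ZMod 2) = p + 1 then
          (-1 : K) ^ r * qq ^ (-(e * (((m : ℤ) - 1) * ((r : ℤ) + (u : ℤ)) - (r : ℤ)))) *
            qbinomx (qq ^ 2) ((m - 2) / 2) u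
        else
          (-1 : K) ^ r * qq ^ (-(e * (((m : ℤ) - 3) * ((r : ℤ) + (u : ℤ)) + (r : ℤ)))) *
            qbinomx (qq ^ 2) ((m - 2) / 2) u)
      else
        (if (r : ZMod 2) = p + 1 then
          (-1 : K) ^ r * qq ^ (-(e * ((m : ℤ) - 2) * ((r : ℤ) + (u : ℤ)))) *
            qbinomx (qq ^ 2) ((m - 1) / 2) u
        else
          (-1 : K) ^ r * qq ^ (-(e * ((m : ℤ) - 2) * ((r : ℤ) + (u : ℤ)))) *
            qbinomx (qq ^ 2) ((m - 3) / 2) u) := by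
  have hparity : (r : ZMod 2) = p + 1 ↔ ¬(r : ZMod 2) = p := by
    rw [eq_comm, zmod_two_add_one_eq_iff, ne_comm]
  have hqq : qq ≠ 0 := isGeneric_qq.ne_zero
  simp only [ytilCoeff, reducedCoeff, hparity, qbinomInt_qq_zpow_sq he, Int.cast_natCast,
    zpow_natCast (-1 : K)]
  split_ifs
  · have hpow : (qq ^ e) ^ (-((m - 2) * (r + u)) : ℤ) * (qq ^ e) ^ (u : ℤ) =
        qq ^ (-(e * ((m - 3) * (r + u) + r))) := by
      rw [← zpow_mul, ← zpow_mul, ← zpow_add₀ hqq]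
      ring_nf
    rw [← hpow]
    ring
  · have hpow : (qq ^ e) ^ (-((m - 2) * (r + u)) : ℤ) * (qq ^ e) ^ (-u : ℤ) =
        qq ^ (-(e * ((m - 1) * (r + u) - r))) := by
      rw [← zpow_mul, ← zpow_mul, ← zpow_add₀ hqq]
      ring_nf
    rw [← hpow]
    ring
  all_goals rw [← zpow_mul, mul_neg, mul_assoc e]

theorem ytil_eq_ytilSum {e : ℤ} (he : e = 1 ∨ e = -1) (p : ZMod 2) {m N : ℕ} (hm : m < N) :
    ytil B C Z p e m = ytilSum B C Z p N m (ytilCoeff (qq ^ e) p m) := by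
  have hneg {u r : ℕ} (h : m < 2 * u + r) : ytilTerm B C Z p u r (m - 2 * u - r) = 0 :=
    ytilTerm_of_neg _ _ _ _ _ _ (by omega)
  rw [ytil, ytilSum_apply]
  refine Finset.sum_subset_zero_on_sdiff (Finset.range_subset_range.mpr (by omega))
    (fun u hu => Finset.sum_eq_zero fun r _ => ?_) fun u hu => ?_
  · rw [Finset.mem_sdiff, Finset.mem_range, Finset.mem_range] at hu
    rw [hneg (by omega), smul_zero]
  rw [Finset.mem_range] at hu
  refine Finset.sum_subset_zero_on_sdiff (Finset.range_subset_range.mpr (by omega))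
    (fun r hr => ?_) fun r hr => ?_
  · rw [Finset.mem_sdiff, Finset.mem_range, Finset.mem_range] at hr
    rw [hneg (by omega), smul_zero]
  · rw [Finset.mem_range] at hr
    rw [← ytilCoeff_qq_zpow he, show (m : ℤ) - 2 * u - r = (m - 2 * u - r : ℕ) by omega, ytilTerm,
      iDPInt_natCast, iDPInt_natCast, smul_pow, smul_mul_assoc, smul_smul, mul_comm]

theorem ytil_rec (hZ : ∀ a : A, Commute Z a) {e : ℤ} (he : e = 1 ∨ e = -1) (p : ZMod 2) {m : ℕ}
    (hm : 1 ≤ m) :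
    qint (m + 2) • ytil B C Z p e (m + 2) =
      ytil B C Z p e (m + 1) * B -
        (qq ^ e) ^ (-(2 * m + 1) : ℤ) • (B * ytil B C Z p e (m + 1)) +
        ((qq ^ e) ^ (-(2 * m) : ℤ) * qint (m - 1)) • (qq • Z * ytil B C Z p e m) := by
  have hgeneric : IsGeneric (qq ^ e) := fun n hn => by
    rw [qintx_qq_zpow he]
    exact isGeneric_qq n hn
  have hneg (n : ℕ) (r : ℤ) : ytilCoeff (qq ^ e) p n (-1) r = 0 :=
    ytilCoeff_of_neg _ _ _ (by norm_num) r
  rw [ytil_eq_ytilSum he p (show m < m + 3 by omega),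
    ytil_eq_ytilSum he p (show m + 1 < m + 3 by omega),
    ytil_eq_ytilSum he p (show m + 2 < m + 3 by omega), ytilSum_mul hZ p (by omega) (hneg _),
    mul_ytilSum hZ p (by omega) (hneg _), smul_mul_ytilSum p (by omega) (hneg _),
    ← map_smul, ← map_smul, ← map_smul, ← map_sub, ← map_add]
  congr 1
  funext u r
  have h_add_one : ((m + 1 : ℕ) : ℤ) + 1 = m + 2 := by omega
  have h_add_two : ((m + 1 : ℕ) : ℤ) + 2 = m + 3 := by omega
  simpa only [h_add_one, h_add_two, Pi.add_apply, Pi.sub_apply, Pi.smul_apply, smul_eq_mul,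
    qintx_qq_zpow he] using ytilCoeff_rec hgeneric p hm u r

theorem ytil_two (hZ : ∀ a : A, Commute Z a)
    (h : B ^ 2 * C - qint 2 • (B * C * B) + C * B ^ 2 = qq • (Z * C)) (p : ZMod 2) (e : ℤ) :
    ytil B C Z p e 2 = 0 := by
  have hytil : ytil B C Z p e 2 = C * iDP B Z (p + 1) 2 - B * C * B + iDP B Z p 2 * C := by
    rw [sub_eq_add_neg]
    simp [ytil, Finset.sum_range_succ, iDP_zero, iDP_one, qbinomx, qfactx]
  have hcentral : C * (if p + 1 = 1 then qq • Z else 0) + (if p = 1 then qq • Z else 0) * C =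
      qq • (Z * C) := by
    obtain rfl | rfl := zmod_two_eq_zero_or_one p
    · simp [(hZ C).eq]
    · simp [show (1 : ZMod 2) + 1 = 0 from rfl]
  have hscaled : qint 2 • ytil B C Z p e 2 = 0 := by
    rw [hytil, smul_add, smul_sub, ← mul_smul_comm, ← smul_mul_assoc _ _ C,
      qint_two_smul_iDP_two hZ, qint_two_smul_iDP_two hZ, mul_sub, sub_mul]
    refine Eq.trans ?_ (sub_eq_zero.mpr (h.trans hcentral.symm))
    abel
  exact (smul_eq_zero_iff_right (isGeneric_qq 2 two_ne_zero)).mp hscaled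

end Recursion

theorem stmt12 {A : Type*} [Ring A] [Algebra K A] (Bi Bj Z : A)
    (hZ : ∀ a : A, Z * a = a * Z)
    (h : Bi ^ 2 * Bj - qint 2 • (Bi * Bj * Bi) + Bj * Bi ^ 2 = qq • (Z * Bj))
    (p : ZMod 2) (e : ℤ) (he : e = 1 ∨ e = -1) :
    ∀ m : ℕ, 2 ≤ m → ytil Bi Bj Z p e m = 0 := by
  intro m
  induction m using Nat.strong_induction_on with
  | h m ih =>
    intro hm
    obtain rfl | hm := hm.eq_or_lt
    · exact ytil_two hZ h p e
    obtain ⟨n, rfl⟩ := Nat.exists_eq_add_of_le' hm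
    have hlast : qint (n : ℤ) • ytil Bi Bj Z p e (n + 1) = 0 := by
      rcases n with _ | n
      · simp [qint]
      · rw [ih (n + 2) (by omega) (by omega), smul_zero]
    have hrec := ytil_rec (B := Bi) (C := Bj) hZ he p (m := n + 1) (by omega)
    rw [ih (n + 2) (by omega) (by omega), zero_mul, mul_zero, smul_zero, sub_zero, zero_add,
      Nat.cast_succ, add_sub_cancel_right, mul_smul, ← mul_smul_comm, hlast, mul_zero,
      smul_zero] at hrec
    exact (smul_eq_zero_iff_right (isGeneric_qq _ (by omega))).mp hrec
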